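/- arXiv:math/0306219 — 2 statements merged into one kernel-verified Lean document; each statement's English description precedes it below -/
import Mathlib

section
/- For any M ≥ 1, complex parameters λ and vectors z = (z_1,…,z_M), w = (w_1,…,w_M) such that [λ] ≠ 0 and [z_i + w_j] ≠ 0 for all i, j, the M×M determinant det( [λ + z_i + w_j] / ([λ]·[z_i + w_j]) )_{i,j=1}^M equals [λ + Σ_{i=1}^M (z_i + w_i)] · ∏_{1≤i<j≤M} [z_i − z_j][w_i − w_j] / ( [λ] · ∏_{1≤i,j≤M} [z_i + w_j] ). -/
/-!
The formula is proved by induction on the size `M`, condensing the determinant along its `(0, 0)`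
entry (`det_eq_pivot_mul`). By the Riemann relation, which is the case `M = 2` (`bracket_two`), the
condensed matrix is, up to row and column factors, of the same form, with the variables `z 0`, `w 0`
removed and `lam` replaced by `lam + z 0 + w 0` (`cauchy_step`).

The condensation needs `f (lam + z 0 + w 0) ≠ 0`. As `f` is entire and not identically zero, its
zeros are isolated, so this holds for all parameters close to but distinct from `lam`; both sides
are continuous in the parameter where `f lam ≠ 0`, which gives the remaining case.
-/

open scoped Topology

open Finset

/-- Shifted factorial `[x]_k = [x][x+δ]⋯[x+(k-1)δ]` with respect to the bracket `f`. -/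
noncomputable def sf (f : ℂ → ℂ) (δ : ℂ) (x : ℂ) (k : ℕ) : ℂ :=
  ∏ i ∈ Finset.range k, f (x + (i : ℂ) * δ)

/-- Difference product `Δ(x) = ∏_{i<j} [x_i - x_j]`. -/
noncomputable def Del (f : ℂ → ℂ) {m : ℕ} (x : Fin m → ℂ) : ℂ :=
  ∏ i : Fin m, ∏ j ∈ Finset.univ.filter (fun j => i < j), f (x i - x j)

/-- The multiple hypergeometric series `Φ^{m,n}_N(a; x | b; c)`. -/
noncomputable def Phi (f : ℂ → ℂ) (δ : ℂ) {m n : ℕ} (a x : Fin m → ℂ)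
    (b c : Fin n → ℂ) (N : ℕ) : ℂ :=
  ∑ μ ∈ Finset.Nat.antidiagonalTuple m N,
    (Del f (fun i => x i + (μ i : ℂ) * δ) / Del f x)
      * (∏ i, ∏ j, sf f δ (x i - x j + a j) (μ i) / sf f δ (x i - x j + δ) (μ i))
      * (∏ i, ∏ k, sf f δ (x i + b k) (μ i) / sf f δ (x i + c k) (μ i))

/-- The `μ`-th summand of the very well-poised series `E^{m,n}(a; x | s; u; v)`. -/
noncomputable def Eterm (f : ℂ → ℂ) (δ : ℂ) {m n : ℕ} (a x : Fin m → ℂ) (s : ℂ)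
    (u v : Fin n → ℂ) (μ : Fin m → ℕ) : ℂ :=
  (Del f (fun i => x i + (μ i : ℂ) * δ) / Del f x)
    * (∏ i, f (x i + s + (((∑ j, μ j) + μ i : ℕ) : ℂ) * δ) / f (x i + s))
    * (∏ j, (sf f δ (s + x j) (∑ i, μ i) / sf f δ (δ + s + x j - a j) (∑ i, μ i))
        * ∏ i, sf f δ (x i - x j + a j) (μ i) / sf f δ (x i - x j + δ) (μ i))
    * (∏ k, (sf f δ (v k) (∑ i, μ i) / sf f δ (δ + s - u k) (∑ i, μ i))
        * ∏ i, sf f δ (x i + u k) (μ i) / sf f δ (x i + δ + s - v k) (μ i))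

/-- The very well-poised multiple series `E^{m,n}(a; x | s; u; v)`. -/
noncomputable def Evw (f : ℂ → ℂ) (δ : ℂ) {m n : ℕ} (a x : Fin m → ℂ) (s : ℂ)
    (u v : Fin n → ℂ) : ℂ :=
  ∑' μ : Fin m → ℕ, Eterm f δ a x s u v μ

/-- The one-dimensional very well-poised series `_{r+3}E_{r+2}(s; u_1, …, u_r)`. -/
noncomputable def E1 (f : ℂ → ℂ) (δ : ℂ) {r : ℕ} (s : ℂ) (u : Fin r → ℂ) : ℂ :=
  ∑' k : ℕ, (f (s + 2 * (k : ℂ) * δ) / f s) * (sf f δ s k / sf f δ δ k)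
    * ∏ i, sf f δ (u i) k / sf f δ (δ + s - u i) k

/-- The bracket does not vanish identically, so its zeros are isolated. -/
lemma bracket_eventually_ne_zero {f : ℂ → ℂ} (hf : f ≠ 0) (hdiff : Differentiable ℂ f) (c a : ℂ) :
    ∀ᶠ l in 𝓝[≠] a, f (l + c) ≠ 0 := by
  have hg : Differentiable ℂ (fun l => f (l + c)) := hdiff.comp (differentiable_id.add_const c)
  have han : AnalyticOnNhd ℂ (fun l => f (l + c)) Set.univ := fun x _ => hg.analyticAt x
  rcases (han a trivial).eventually_eq_zero_or_eventually_ne_zero with h | h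
  · exfalso
    apply hf
    have h0 := han.eqOn_zero_of_preconnected_of_eventuallyEq_zero isPreconnected_univ trivial h
    funext x
    simpa using h0 (Set.mem_univ (x - c))
  · exact h

/-- Condensation of a determinant along a nonzero `(0, 0)` entry. -/
lemma det_eq_pivot_mul {n : ℕ} (A : Matrix (Fin (n + 1)) (Fin (n + 1)) ℂ) (h : A 0 0 ≠ 0) :
    A.det = A 0 0 *
      Matrix.det (Matrix.of fun i j : Fin n =>
        A i.succ j.succ - A i.succ 0 / A 0 0 * A 0 j.succ) := by
  let B : Matrix (Fin (n + 1)) (Fin (n + 1)) ℂ :=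
    Matrix.of (Fin.cons (A 0) fun i j => A i.succ j - A i.succ 0 / A 0 0 * A 0 j)
  have hAB : A.det = B.det := by
    refine Matrix.det_eq_of_forall_row_eq_smul_add_const
      (Fin.cons 0 fun i => A i.succ 0 / A 0 0) 0 rfl ?_
    intro i j
    refine Fin.cases ?_ (fun i => ?_) i <;> simp [B]
  rw [hAB, Matrix.det_succ_column_zero, Fin.sum_univ_succ, Finset.sum_eq_zero]
  · simp only [Fin.val_zero, pow_zero, one_mul, add_zero]
    congr 1
  · intro i _
    have : B i.succ 0 = 0 := by
      simp [B, div_mul_cancel₀ _ h]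
    rw [this]
    ring

/-- The product over the pairs `i < j` of `Fin (n + 1)`, with the pairs containing `0` split off. -/
lemma prod_lt_succ {n : ℕ} (g : Fin (n + 1) → Fin (n + 1) → ℂ) :
    ∏ i, ∏ j ∈ Finset.univ.filter (fun j => i < j), g i j =
      (∏ j : Fin n, g 0 j.succ) *
        ∏ i : Fin n, ∏ j ∈ Finset.univ.filter (fun j => i < j), g i.succ j.succ := by
  simp only [Finset.prod_filter, Fin.prod_univ_succ, Fin.succ_lt_succ_iff, Fin.succ_pos,
    Fin.not_lt_zero, if_true, if_false, one_mul]

/-- The case `M = 2` of the determinant formula, with denominators cleared. This is an instance of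
the Riemann relation, with arguments the half-sums of those occurring here. -/
lemma bracket_two {f : ℂ → ℂ}
    (hRiem : ∀ x y u v : ℂ,
      f (x + y) * f (x - y) * f (u + v) * f (u - v) =
        f (x + u) * f (x - u) * f (y + v) * f (y - v)
          - f (x + v) * f (x - v) * f (y + u) * f (y - u))
    (lam z z' w w' : ℂ) :
    f (lam + z + w) * f (lam + z' + w') * f (z + w') * f (z' + w)
      - f (lam + z + w') * f (lam + z' + w) * f (z + w) * f (z' + w') =
      f lam * f (lam + z + w + z' + w') * f (z - z') * f (w - w') := by
  have h := hRiem (lam + (z + z' + w + w') / 2) ((z + z' + w + w') / 2)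
    ((z + w - z' - w') / 2) ((z + w' - z' - w) / 2)
  ring_nf at h ⊢
  linear_combination -h

/-- The condensation step: it turns the matrix with parameter `lam` into one of the same shape
with parameter `lam + z 0 + w 0`, up to row and column factors. It needs a nonzero pivot. -/
lemma cauchy_step {f : ℂ → ℂ}
    (hRiem : ∀ x y u v : ℂ,
      f (x + y) * f (x - y) * f (u + v) * f (u - v) =
        f (x + u) * f (x - u) * f (y + v) * f (y - v)
          - f (x + v) * f (x - v) * f (y + u) * f (y - u))
    {n : ℕ} (lam : ℂ) (z w : Fin (n + 1) → ℂ)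
    (hlam : f lam ≠ 0) (hlam' : f (lam + z 0 + w 0) ≠ 0) (hzw : ∀ i j, f (z i + w j) ≠ 0) :
    Matrix.det (Matrix.of fun i j => f (lam + z i + w j) / (f lam * f (z i + w j))) =
      f (lam + z 0 + w 0) / (f lam * f (z 0 + w 0)) *
        ((∏ i : Fin n, f (z 0 - z i.succ) / f (z i.succ + w 0)) *
        ((∏ j : Fin n, f (w 0 - w j.succ) / f (z 0 + w j.succ)) *
        Matrix.det (Matrix.of fun i j : Fin n => f (lam + z 0 + w 0 + z i.succ + w j.succ) /
          (f (lam + z 0 + w 0) * f (z i.succ + w j.succ))))) := by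
  rw [det_eq_pivot_mul _ (by simp [hlam, hlam', hzw]), ← Matrix.det_mul_row,
    ← Matrix.det_mul_column]
  simp only [Matrix.of_apply]
  congr 2
  ext i j
  simp only [Matrix.of_apply]
  have h := bracket_two hRiem lam (z 0) (z i.succ) (w 0) (w j.succ)
  have h1 := hzw 0 0
  have h2 := hzw i.succ 0
  have h3 := hzw 0 j.succ
  have h4 := hzw i.succ j.succ
  field_simp
  linear_combination h

/-- The determinant formula for every size, including the empty matrix. -/
lemma cauchy_det_aux {f : ℂ → ℂ} (hf : f ≠ 0)
    (hdiff : Differentiable ℂ f)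
    (hRiem : ∀ x y u v : ℂ,
      f (x + y) * f (x - y) * f (u + v) * f (u - v) =
        f (x + u) * f (x - u) * f (y + v) * f (y - v)
          - f (x + v) * f (x - v) * f (y + u) * f (y - u))
    (M : ℕ) : ∀ (lam : ℂ) (z w : Fin M → ℂ),
    f lam ≠ 0 → (∀ i j, f (z i + w j) ≠ 0) →
    Matrix.det (Matrix.of fun i j => f (lam + z i + w j) / (f lam * f (z i + w j))) =
      f (lam + ∑ i, (z i + w i)) *
          (∏ i, ∏ j ∈ Finset.univ.filter (fun j => i < j), f (z i - z j) * f (w i - w j)) /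
        (f lam * ∏ i, ∏ j, f (z i + w j)) := by
  induction M with
  | zero => intro lam z w hlam _; simp [hlam]
  | succ n ih =>
    intro lam z w hlam hzw
    -- The case of a nonzero pivot; the parameter is free, since it is varied below.
    have key : ∀ l : ℂ, f l ≠ 0 → f (l + (z 0 + w 0)) ≠ 0 →
        Matrix.det (Matrix.of fun i j => f (l + z i + w j) / (f l * f (z i + w j))) =
          f (l + ∑ i, (z i + w i)) *
          (∏ i, ∏ j ∈ Finset.univ.filter (fun j => i < j), f (z i - z j) * f (w i - w j)) /
          (f l * ∏ i, ∏ j, f (z i + w j)) := by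
      intro l hl hl'
      rw [← add_assoc] at hl'
      rw [cauchy_step hRiem l z w hl hl' hzw,
        ih _ (fun i => z i.succ) (fun i => w i.succ) hl' (fun i j => hzw _ _), prod_lt_succ]
      simp only [Fin.prod_univ_succ, Fin.sum_univ_succ, Finset.prod_mul_distrib,
        Finset.prod_div_distrib, ← add_assoc]
      have h1 := hzw 0 0
      have h2 : ∏ i : Fin n, f (z i.succ + w 0) ≠ 0 := Finset.prod_ne_zero_iff.2 fun i _ => hzw _ _
      have h3 : ∏ j : Fin n, f (z 0 + w j.succ) ≠ 0 := Finset.prod_ne_zero_iff.2 fun i _ => hzw _ _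
      have h4 : ∏ i : Fin n, ∏ j : Fin n, f (z i.succ + w j.succ) ≠ 0 :=
        Finset.prod_ne_zero_iff.2 fun i _ => Finset.prod_ne_zero_iff.2 fun j _ => hzw _ _
      field_simp
    have hev : ∀ᶠ l in 𝓝[≠] lam, f l ≠ 0 ∧ f (l + (z 0 + w 0)) ≠ 0 := by
      have h := bracket_eventually_ne_zero hf hdiff 0 lam
      simp only [add_zero] at h
      exact h.and (bracket_eventually_ne_zero hf hdiff _ lam)
    have hc := hdiff.continuous
    have hP : f lam * ∏ i, ∏ j, f (z i + w j) ≠ 0 := mul_ne_zero hlam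
      (Finset.prod_ne_zero_iff.2 fun i _ => Finset.prod_ne_zero_iff.2 fun j _ => hzw _ _)
    have hL : ContinuousAt (fun l => Matrix.det
        (Matrix.of fun i j => f (l + z i + w j) / (f l * f (z i + w j)))) lam := by
      simp only [Matrix.det_apply, Matrix.of_apply]
      refine tendsto_finsetSum _ fun σ _ => ?_
      refine Filter.Tendsto.const_smul (tendsto_finsetProd _ fun i _ => ?_) _
      exact ContinuousAt.div (by fun_prop) (by fun_prop) (mul_ne_zero hlam (hzw _ _))
    have hR : ContinuousAt (fun l => f (l + ∑ i, (z i + w i)) *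
          (∏ i, ∏ j ∈ Finset.univ.filter (fun j => i < j), f (z i - z j) * f (w i - w j)) /
          (f l * ∏ i, ∏ j, f (z i + w j))) lam :=
      ContinuousAt.div (by fun_prop) (by fun_prop) hP
    -- The pivot may vanish at `lam` itself, but not at nearby parameters.
    exact tendsto_nhds_unique_of_eventuallyEq (hL.tendsto.mono_left nhdsWithin_le_nhds)
      (hR.tendsto.mono_left nhdsWithin_le_nhds) (hev.mono fun l hl => key l hl.1 hl.2)

/-- **Cauchy determinant formula** for the bracket `[·]` (Theorem 1.1). -/
theorem cauchy_determinant_formula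
    (f : ℂ → ℂ) (hf : f ≠ 0) (hodd : ∀ t : ℂ, f (-t) = -f t) (hdiff : Differentiable ℂ f)
    (hRiem : ∀ x y u v : ℂ,
      f (x + y) * f (x - y) * f (u + v) * f (u - v) =
        f (x + u) * f (x - u) * f (y + v) * f (y - v)
          - f (x + v) * f (x - v) * f (y + u) * f (y - u))
    (M : ℕ) (hM : 1 ≤ M) (lam : ℂ) (z w : Fin M → ℂ)
    (hlam : f lam ≠ 0) (hzw : ∀ i j, f (z i + w j) ≠ 0) :
    Matrix.det (Matrix.of fun i j => f (lam + z i + w j) / (f lam * f (z i + w j))) =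
      f (lam + ∑ i, (z i + w i)) *
          (∏ i, ∏ j ∈ Finset.univ.filter (fun j => i < j), f (z i - z j) * f (w i - w j)) /
        (f lam * ∏ i, ∏ j, f (z i + w j)) := by
  exact cauchy_det_aux hf hdiff hRiem M lam z w hlam hzw
end

section
/- For any M ≥ 1, any u, λ ∈ ℂ, and vectors z, w ∈ ℂ^M in generic position (so that every bracket appearing in a denominator below is nonzero, in particular [z_i − z_j] ≠ 0 for i ≠ j, [w_k − w_l] ≠ 0 for k ≠ l, [z_i + w_k + δ] ≠ 0, and [λ + |z| + |w|] ≠ 0), the following identity holds: Σ_{K ⊆ {1,…,M}} u^{|K|} · ([λ + |z| + |w| + |K|δ] / [λ + |z| + |w|]) · ∏_{i∈K, j∉K} [z_i − z_j + δ]/[z_i − z_j] · ∏_{i∈K, 1≤k≤M} [z_i + w_k]/[z_i + w_k + δ] = Σ_{L ⊆ {1,…,M}} u^{|L|} · ([λ + |z| + |w| + |L|δ] / [λ + |z| + |w|]) · ∏_{k∈L, l∉L} [w_k − w_l + δ]/[w_k − w_l] · ∏_{1≤i≤M, k∈L} [z_i + w_k]/[z_i + w_k + δ], where |z| = z_1 +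 ⋯ + z_M and |w| = w_1 + ⋯ + w_M. -/
/-!
The ratio `f (Λ + |K| δ) / f Λ` and the two products in the `K`-th summand together form the
quotient `T_K D / D`, where `D` is the Frobenius determinant
`D(z|w) = det (g (z_i + w_j))`, `g x = f (λ + x) / f x`, and `T_K` shifts `z_i` by `δ` for `i ∈ K`.
This follows from Frobenius' evaluation of `D` (`frobenius_det`), whose inductive step is
elimination of the first row and column: by the Riemann relation the Schur complement is, up to
row and column factors, the same kind of matrix with `λ` replaced by `λ + z_0 + w_0`
(`bracket_schur`).

By multilinearity in the rows, `∑_K u^|K| T_K D = det (g (z_i + w_j) + u g (z_i + w_j + δ))`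
(`det_expansion`). The right-hand side depends on `z` and `w` only through the sums `z_i + w_j`,
so exchanging `z` and `w` transposes the matrix and leaves the determinant unchanged.

The division by `D` requires `f λ ≠ 0` and `f (z_i + w_k) ≠ 0`, which are not assumed. The general
case is the limit `t → 0` of the identity at `z_i + t` and `λ - M t`, a deformation that fixes
`λ + |z| + |w|` and all differences `z_i - z_j`; zeros of `f` are isolated.
-/

open Finset

open Filter Topology

/-! ### Genericity and continuity -/

/-- Isolated zeros of the bracket along any nonconstant affine line. -/
lemma eventually_bracket_ne {f : ℂ → ℂ} (hf : f ≠ 0) (hdiff : Differentiable ℂ f)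
    (a c : ℂ) (hc : c ≠ 0) : ∀ᶠ t in 𝓝[≠] (0 : ℂ), f (a + c * t) ≠ 0 := by
  by_contra h
  have h1 : ∃ᶠ t in 𝓝[≠] (0 : ℂ), f (a + c * t) = (fun _ => (0 : ℂ)) t := by
    exact Filter.not_eventually.1 h |>.mono fun t ht => not_not.1 ht
  have hd : Differentiable ℂ (fun t : ℂ => f (a + c * t)) :=
    hdiff.comp (by fun_prop)
  have h2 := AnalyticOnNhd.eq_of_frequently_eq (z₀ := (0 : ℂ))
    (f := fun t : ℂ => f (a + c * t)) (g := fun _ => 0)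
    (fun x _ => hd.analyticAt x) (fun x _ => analyticAt_const) h1
  apply hf
  funext x
  have h3 := congrFun h2 ((x - a) / c)
  simp only [mul_div_cancel₀ _ hc] at h3
  simpa [mul_div_cancel₀ _ hc] using h3

lemma eq_at_zero_of_eventually {F G : ℂ → ℂ} (hF : ContinuousAt F 0) (hG : ContinuousAt G 0)
    (h : ∀ᶠ t in 𝓝[≠] (0 : ℂ), F t = G t) : F 0 = G 0 :=
  ((ContinuousAt.eventuallyEq_nhds_iff_eventuallyEq_nhdsNE hF hG).1 h).eq_of_nhds

/-! ### The Frobenius determinant -/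

/-- Elimination of the first row and column of a matrix. -/
lemma det_eq_mul_det_schur {n : ℕ} (A : Matrix (Fin (n + 1)) (Fin (n + 1)) ℂ)
    (h : A 0 0 ≠ 0) :
    A.det = A 0 0 * (Matrix.of fun i j : Fin n =>
      A i.succ j.succ - A i.succ 0 * A 0 j.succ / A 0 0).det := by
  have h1 : A.det = (Matrix.of (Fin.cons (A 0)
      (fun (i : Fin n) j => A i.succ j - A i.succ 0 / A 0 0 * A 0 j)) :
        Matrix (Fin (n + 1)) (Fin (n + 1)) ℂ).det := by
    refine Matrix.det_eq_of_forall_row_eq_smul_add_const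
      (Fin.cons 0 (fun i => A i.succ 0 / A 0 0)) 0 (by simp) ?_
    intro i j
    refine Fin.cases ?_ (fun i => ?_) i <;> simp
  rw [h1, Matrix.det_succ_column_zero, Fin.sum_univ_succ]
  simp only [Matrix.of_apply, Fin.cons_zero, Fin.cons_succ, div_mul_cancel₀ _ h, sub_self]
  simp only [mul_zero, zero_mul, Finset.sum_const_zero, add_zero, Fin.val_zero, pow_zero, one_mul]
  congr 2
  ext i j
  simp [Matrix.submatrix]
  ring

lemma Del_succ (f : ℂ → ℂ) {n : ℕ} (x : Fin (n + 1) → ℂ) :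
    Del f x = (∏ j : Fin n, f (x 0 - x j.succ)) * Del f (fun i => x i.succ) := by
  simp [Del, Finset.prod_filter, Fin.prod_univ_succ]

/-- The entries of the Schur complement of the Frobenius matrix at its first entry, with
`a = z_0`, `b = z_i`, `c = w_0`, `d = w_j`. -/
lemma bracket_schur {f : ℂ → ℂ} (hodd : ∀ t : ℂ, f (-t) = -f t)
    (hRiem : ∀ x y u v : ℂ,
      f (x + y) * f (x - y) * f (u + v) * f (u - v) =
        f (x + u) * f (x - u) * f (y + v) * f (y - v)
          - f (x + v) * f (x - v) * f (y + u) * f (y - u))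
    (lam a b c d : ℂ) (h2 : f (a + d) ≠ 0) (h3 : f (b + c) ≠ 0)
    (h4 : f (b + d) ≠ 0) (h5 : f (lam + a + c) ≠ 0) :
    f (lam + b + d) / f (b + d)
        - f (lam + b + c) / f (b + c) * (f (lam + a + d) / f (a + d))
          / (f (lam + a + c) / f (a + c))
      = (f (a - b) / f (b + c)) * ((f lam / f (lam + a + c) * f (c - d) / f (a + d)) *
          (f (lam + a + c + b + d) / f (b + d))) := by
  have key : f (lam + b + d) * f (lam + a + c) * f (b + c) * f (a + d)
      - f (lam + b + c) * f (lam + a + d) * f (b + d) * f (a + c)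
      = f (a - b) * f (c - d) * f lam * f (lam + a + c + b + d) := by
    have r := hRiem (lam + (a + b + c + d) / 2) ((a + b + c + d) / 2)
      ((b + d - a - c) / 2) ((b + c - a - d) / 2)
    have o1 : f (b - a) = -f (a - b) := by rw [← hodd]; congr 1; ring
    have o2 : f (d - c) = -f (c - d) := by rw [← hodd]; congr 1; ring
    rw [show lam + (a + b + c + d) / 2 + (a + b + c + d) / 2 = lam + a + c + b + d by ring,
      show lam + (a + b + c + d) / 2 - (a + b + c + d) / 2 = lam by ring,
      show (b + d - a - c) / 2 + (b + c - a - d) / 2 = b - a by ring,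
      show (b + d - a - c) / 2 - (b + c - a - d) / 2 = d - c by ring,
      show lam + (a + b + c + d) / 2 + (b + d - a - c) / 2 = lam + b + d by ring,
      show lam + (a + b + c + d) / 2 - (b + d - a - c) / 2 = lam + a + c by ring,
      show (a + b + c + d) / 2 + (b + c - a - d) / 2 = b + c by ring,
      show (a + b + c + d) / 2 - (b + c - a - d) / 2 = a + d by ring,
      show lam + (a + b + c + d) / 2 + (b + c - a - d) / 2 = lam + b + c by ring,
      show lam + (a + b + c + d) / 2 - (b + c - a - d) / 2 = lam + a + d by ring,
      show (a + b + c + d) / 2 + (b + d - a - c) / 2 = b + d by ring,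
      show (a + b + c + d) / 2 - (b + d - a - c) / 2 = a + c by ring, o1, o2] at r
    linear_combination -r
  field_simp
  linear_combination key

/-- Frobenius' determinant formula, multiplied by `f lam` so that it also holds for `n = 0`. It is
valid for every `lam`: values at which a pivot vanishes are reached by continuity. -/
lemma frobenius_det {f : ℂ → ℂ} (hf : f ≠ 0) (hodd : ∀ t : ℂ, f (-t) = -f t)
    (hdiff : Differentiable ℂ f)
    (hRiem : ∀ x y u v : ℂ,
      f (x + y) * f (x - y) * f (u + v) * f (u - v) =
        f (x + u) * f (x - u) * f (y + v) * f (y - v)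
          - f (x + v) * f (x - v) * f (y + u) * f (y - u))
    (n : ℕ) : ∀ (lam : ℂ) (z w : Fin n → ℂ), (∀ i j, f (z i + w j) ≠ 0) →
    f lam * (Matrix.of fun i j => f (lam + z i + w j) / f (z i + w j)).det =
      f lam ^ n * f (lam + (∑ i, z i) + (∑ i, w i)) * (Del f z * Del f w) /
        ∏ i, ∏ j, f (z i + w j) := by
  induction n with
  | zero => intro lam z w _; simp [Del]
  | succ n ih =>
    intro lam z w h
    have hc : Continuous f := hdiff.continuous
    -- The first pivot is `f (lam + z 0 + w 0) / f (z 0 + w 0)`.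
    have generic : ∀ lam : ℂ, f (lam + z 0 + w 0) ≠ 0 →
        f lam * (Matrix.of fun i j => f (lam + z i + w j) / f (z i + w j)).det =
          f lam ^ (n + 1) * f (lam + (∑ i, z i) + (∑ i, w i)) * (Del f z * Del f w) /
            ∏ i, ∏ j, f (z i + w j) := by
      intro lam h0
      rw [det_eq_mul_det_schur _ (by simpa using ⟨h0, h 0 0⟩)]
      simp only [Matrix.of_apply]
      have hm : (Matrix.of fun i j : Fin n =>
          f (lam + z i.succ + w j.succ) / f (z i.succ + w j.succ)
            - f (lam + z i.succ + w 0) / f (z i.succ + w 0) *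
              (f (lam + z 0 + w j.succ) / f (z 0 + w j.succ)) /
              (f (lam + z 0 + w 0) / f (z 0 + w 0))) =
          Matrix.of fun i j : Fin n => (f (z 0 - z i.succ) / f (z i.succ + w 0)) *
            (Matrix.of fun i j : Fin n =>
              (f lam / f (lam + z 0 + w 0) * f (w 0 - w j.succ) / f (z 0 + w j.succ)) *
              (Matrix.of fun i j : Fin n => f (lam + z 0 + w 0 + z i.succ + w j.succ) /
                f (z i.succ + w j.succ)) i j) i j := by
        ext i j
        simp only [Matrix.of_apply]
        exact bracket_schur hodd hRiem lam _ _ _ _ (h _ _) (h _ _) (h _ _) h0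
      rw [hm, Matrix.det_mul_column, Matrix.det_mul_row]
      have hi := ih (lam + z 0 + w 0) (fun i => z i.succ) (fun i => w i.succ)
        (fun i j => h _ _)
      have hs : lam + (∑ i, z i) + (∑ i, w i) =
          lam + z 0 + w 0 + (∑ i : Fin n, z i.succ) + ∑ i : Fin n, w i.succ := by
        rw [Fin.sum_univ_succ, Fin.sum_univ_succ]; ring
      rw [hs, Del_succ f z, Del_succ f w]
      have hdet := eq_div_of_mul_eq h0 ((mul_comm _ _).trans hi)
      rw [hdet]
      simp only [Fin.prod_univ_succ (n := n), Finset.prod_mul_distrib, Finset.prod_div_distrib,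
        Finset.prod_const, Finset.card_univ, Fintype.card_fin]
      have p1 : ∏ i : Fin n, f (z i.succ + w 0) ≠ 0 := Finset.prod_ne_zero_iff.2 fun i _ => h _ _
      have p2 : ∏ i : Fin n, f (z 0 + w i.succ) ≠ 0 := Finset.prod_ne_zero_iff.2 fun i _ => h _ _
      have p3 : ∏ i : Fin n, ∏ j : Fin n, f (z i.succ + w j.succ) ≠ 0 :=
        Finset.prod_ne_zero_iff.2 fun i _ => Finset.prod_ne_zero_iff.2 fun i _ => h _ _
      have p0 := h 0 0
      field_simp
      ring
    have := eq_at_zero_of_eventually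
      (F := fun t => f (lam + t) *
        (Matrix.of fun i j => f (lam + t + z i + w j) / f (z i + w j)).det)
      (G := fun t => f (lam + t) ^ (n + 1) * f (lam + t + (∑ i, z i) + (∑ i, w i)) *
        (Del f z * Del f w) / ∏ i, ∏ j, f (z i + w j))
      ?_ ?_ ?_
    · simpa using this
    · apply Continuous.continuousAt
      refine Continuous.mul (by fun_prop) (Continuous.matrix_det ?_)
      refine continuous_matrix fun i j => ?_
      simp only [Matrix.of_apply]
      fun_prop
    · apply Continuous.continuousAt
      fun_prop
    · filter_upwards [eventually_bracket_ne hf hdiff (lam + z 0 + w 0) 1 one_ne_zero] with t ht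
      refine generic (lam + t) ?_
      convert ht using 2
      ring

/-! ### Shifts of the difference product -/

lemma prod_prod_eq_prod_lt {n : ℕ} (c : Fin n → Fin n → ℂ) (hc : ∀ i, c i i = 1) :
    ∏ i, ∏ j, c i j = ∏ i, ∏ j ∈ Finset.univ.filter (fun j => i < j), c i j * c j i := by
  have h : ∀ i j, c i j = (if i < j then c i j else 1) * (if j < i then c i j else 1) := by
    intro i j
    rcases lt_trichotomy i j with h | h | h
    · simp [h, h.le]
    · simp [h, hc]
    · simp [h, h.le]
  simp_rw [Finset.prod_filter]
  calc ∏ i, ∏ j, c i j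
      = (∏ i, ∏ j, if i < j then c i j else 1) * ∏ i, ∏ j, if j < i then c i j else 1 := by
        simp_rw [← Finset.prod_mul_distrib, ← h]
    _ = (∏ i, ∏ j, if i < j then c i j else 1) * ∏ i, ∏ j, if i < j then c j i else 1 := by
        congr 1
        exact Finset.prod_comm
    _ = _ := by
        simp_rw [← Finset.prod_mul_distrib]
        refine Finset.prod_congr rfl fun i _ => Finset.prod_congr rfl fun j _ => ?_
        split_ifs <;> simp

lemma Del_ne_zero {f : ℂ → ℂ} {n : ℕ} {z : Fin n → ℂ}
    (hz : ∀ i j, i ≠ j → f (z i - z j) ≠ 0) : Del f z ≠ 0 :=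
  Finset.prod_ne_zero_iff.2 fun i _ => Finset.prod_ne_zero_iff.2 fun j hj =>
    hz i j (Finset.mem_filter.1 hj).2.ne

/-- Only the pairs with exactly one index in `K` change under the shift, and oddness of `f` turns
the factor of a pair `i < j` with `j ∈ K`, `i ∉ K` into the one with the roles exchanged. -/
lemma Del_shift {f : ℂ → ℂ} (hodd : ∀ t : ℂ, f (-t) = -f t) (δ : ℂ) {n : ℕ} {z : Fin n → ℂ}
    (hz : ∀ i j, i ≠ j → f (z i - z j) ≠ 0) (K : Finset (Fin n)) :
    Del f (fun i => z i + if i ∈ K then δ else 0) =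
      Del f z * ∏ i ∈ K, ∏ j ∈ Kᶜ, f (z i - z j + δ) / f (z i - z j) := by
  have h1 : ∏ i ∈ K, ∏ j ∈ Kᶜ, f (z i - z j + δ) / f (z i - z j) =
      ∏ i, ∏ j, if i ∈ K ∧ j ∉ K then f (z i - z j + δ) / f (z i - z j) else 1 := by
    rw [← Finset.prod_subset (Finset.subset_univ K)]
    · refine Finset.prod_congr rfl fun i hi => ?_
      rw [← Finset.prod_subset (Finset.subset_univ Kᶜ)]
      · refine Finset.prod_congr rfl fun j hj => ?_
        simp [hi, Finset.mem_compl.1 hj]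
      · intro j _ hj
        simp at hj
        simp [hj]
    · intro i _ hi
      simp [hi]
  rw [h1, prod_prod_eq_prod_lt _ (by simp)]
  unfold Del
  simp_rw [← Finset.prod_mul_distrib]
  refine Finset.prod_congr rfl fun i _ => Finset.prod_congr rfl fun j hj => ?_
  have hij : i ≠ j := (Finset.mem_filter.1 hj).2.ne
  have e1 := hz i j hij
  by_cases hi : i ∈ K <;> by_cases hj : j ∈ K <;> simp [hi, hj]
  · rw [mul_div_cancel₀ _ e1]; congr 1; ring
  · have e2 : f (z j - z i) = - f (z i - z j) := by rw [← hodd]; congr 1; ring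
    have e3 : f (z j - z i + δ) = - f (z i - (z j + δ)) := by rw [← hodd]; congr 1; ring
    rw [e2, e3]
    field_simp

/-! ### Expansion of the shifted determinant and symmetry -/

/-- The sum `F(z|w;u)`, with `Lam` standing for `λ + |z| + |w|`. It is kept as an independent
parameter so that it can be held fixed while `z` is deformed. -/
noncomputable def dualSum (f : ℂ → ℂ) (δ u Lam : ℂ) {n : ℕ} (z w : Fin n → ℂ) : ℂ :=
  ∑ K : Finset (Fin n), u ^ K.card * (f (Lam + (K.card : ℂ) * δ) / f Lam) *
    (∏ i ∈ K, ∏ j ∈ Kᶜ, f (z i - z j + δ) / f (z i - z j)) *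
    (∏ i ∈ K, ∏ k, f (z i + w k) / f (z i + w k + δ))

/-- Expansion of `det (u g (z_i + w_j + δ) + g (z_i + w_j))` over the set `K` of rows in which the
first summand is chosen: every resulting determinant is a Frobenius determinant. -/
lemma det_expansion {f : ℂ → ℂ} (hf : f ≠ 0) (hodd : ∀ t : ℂ, f (-t) = -f t)
    (hdiff : Differentiable ℂ f)
    (hRiem : ∀ x y u v : ℂ,
      f (x + y) * f (x - y) * f (u + v) * f (u - v) =
        f (x + u) * f (x - u) * f (y + v) * f (y - v)
          - f (x + v) * f (x - v) * f (y + u) * f (y - u))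
    (δ u lam : ℂ) {n : ℕ} (z w : Fin n → ℂ)
    (hz : ∀ i j, i ≠ j → f (z i - z j) ≠ 0)
    (hzw : ∀ i k, f (z i + w k + δ) ≠ 0) (hzw0 : ∀ i k, f (z i + w k) ≠ 0)
    (hl : f (lam + (∑ i, z i) + (∑ i, w i)) ≠ 0) :
    f lam * (Matrix.of fun i j => u * (f (lam + (z i + w j + δ)) / f (z i + w j + δ)) +
        f (lam + (z i + w j)) / f (z i + w j)).det =
      f lam ^ n * f (lam + (∑ i, z i) + (∑ i, w i)) * (Del f z * Del f w) /
        (∏ i, ∏ j, f (z i + w j)) *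
      dualSum f δ u (lam + (∑ i, z i) + (∑ i, w i)) z w := by
  have hexp : (Matrix.of fun i j => u * (f (lam + (z i + w j + δ)) / f (z i + w j + δ)) +
        f (lam + (z i + w j)) / f (z i + w j)).det =
      ∑ K : Finset (Fin n), u ^ K.card * (Matrix.of fun i j =>
        f (lam + (z i + if i ∈ K then δ else 0) + w j) /
          f ((z i + if i ∈ K then δ else 0) + w j)).det := by
    have := (Matrix.detRowAlternating (R := ℂ) (n := Fin n)).toMultilinearMap.map_add_univ
      (fun i j => u * (f (lam + (z i + w j + δ)) / f (z i + w j + δ)))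
      (fun i j => f (lam + (z i + w j)) / f (z i + w j))
    refine this.trans (Finset.sum_congr rfl fun K _ => ?_)
    have h2 := (Matrix.detRowAlternating (R := ℂ) (n := Fin n)).toMultilinearMap.map_piecewise_smul
      (fun _ => u) (fun i j => f (lam + (z i + if i ∈ K then δ else 0) + w j) /
          f ((z i + if i ∈ K then δ else 0) + w j)) K
    rw [Finset.prod_const, smul_eq_mul] at h2
    refine Eq.trans ?_ h2
    congr 1
    funext i j
    by_cases hi : i ∈ K
    · simp only [Finset.piecewise, hi, if_true, Pi.smul_apply, smul_eq_mul]
      congr 3 <;> ring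
    · simp only [Finset.piecewise, hi, if_false, add_zero, add_assoc]
  rw [hexp, Finset.mul_sum, dualSum, Finset.mul_sum]
  refine Finset.sum_congr rfl fun K _ => ?_
  have hne : ∀ i j, f ((z i + if i ∈ K then δ else 0) + w j) ≠ 0 := by
    intro i j
    split_ifs
    · convert hzw i j using 2; ring
    · simpa using hzw0 i j
  have hF := frobenius_det hf hodd hdiff hRiem n lam (fun i => z i + if i ∈ K then δ else 0) w hne
  have hsum : lam + (∑ i, (z i + if i ∈ K then δ else 0)) + ∑ i, w i =
      lam + (∑ i, z i) + (∑ i, w i) + (K.card : ℂ) * δ := by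
    rw [Finset.sum_add_distrib, Finset.sum_ite_mem, Finset.univ_inter, Finset.sum_const,
      nsmul_eq_mul]
    ring
  have hden : (∏ i, ∏ j, f ((z i + if i ∈ K then δ else 0) + w j)) *
      ∏ i ∈ K, ∏ k, f (z i + w k) / f (z i + w k + δ) = ∏ i, ∏ j, f (z i + w j) := by
    rw [← Finset.univ_inter K, ← Finset.prod_ite_mem, ← Finset.prod_mul_distrib]
    refine Finset.prod_congr rfl fun i _ => ?_
    by_cases hi : i ∈ K
    · simp only [Finset.univ_inter, hi, if_true]
      rw [← Finset.prod_mul_distrib]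
      refine Finset.prod_congr rfl fun j _ => ?_
      rw [add_right_comm, mul_div_cancel₀ _ (hzw i j)]
    · simp [hi]
  have hden0 : (∏ i, ∏ j, f ((z i + if i ∈ K then δ else 0) + w j)) ≠ 0 :=
    Finset.prod_ne_zero_iff.2 fun i _ => Finset.prod_ne_zero_iff.2 fun j _ => hne i j
  have hq0 : ∏ i ∈ K, ∏ k, f (z i + w k) / f (z i + w k + δ) ≠ 0 :=
    Finset.prod_ne_zero_iff.2 fun i _ => Finset.prod_ne_zero_iff.2 fun j _ =>
      div_ne_zero (hzw0 i j) (hzw i j)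
  rw [mul_left_comm, hF, hsum, Del_shift hodd δ hz K, ← hden]
  field_simp

/-- The symmetry under the additional assumption that the Frobenius determinant is defined and
nonzero; `z ↔ w` transposes the matrix of `det_expansion`. -/
lemma dualSum_symm_generic {f : ℂ → ℂ} (hf : f ≠ 0) (hodd : ∀ t : ℂ, f (-t) = -f t)
    (hdiff : Differentiable ℂ f)
    (hRiem : ∀ x y u v : ℂ,
      f (x + y) * f (x - y) * f (u + v) * f (u - v) =
        f (x + u) * f (x - u) * f (y + v) * f (y - v)
          - f (x + v) * f (x - v) * f (y + u) * f (y - u))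
    (δ u lam : ℂ) {n : ℕ} (z w : Fin n → ℂ) (hlam : f lam ≠ 0)
    (hz : ∀ i j, i ≠ j → f (z i - z j) ≠ 0) (hw : ∀ i j, i ≠ j → f (w i - w j) ≠ 0)
    (hzw : ∀ i k, f (z i + w k + δ) ≠ 0) (hzw0 : ∀ i k, f (z i + w k) ≠ 0)
    (hl : f (lam + (∑ i, z i) + (∑ i, w i)) ≠ 0) :
    dualSum f δ u (lam + (∑ i, z i) + (∑ i, w i)) z w =
      dualSum f δ u (lam + (∑ i, z i) + (∑ i, w i)) w z := by
  have hs : lam + (∑ i, w i) + (∑ i, z i) = lam + (∑ i, z i) + (∑ i, w i) := by ring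
  have h1 := det_expansion hf hodd hdiff hRiem δ u lam z w hz hzw hzw0 hl
  have h2 := det_expansion hf hodd hdiff hRiem δ u lam w z hw
    (fun i k => by rw [add_comm (w i)]; exact hzw k i)
    (fun i k => by rw [add_comm (w i)]; exact hzw0 k i) (by rw [hs]; exact hl)
  rw [← Matrix.det_transpose] at h2
  have hm : (Matrix.of fun i j => u * (f (lam + (w i + z j + δ)) / f (w i + z j + δ)) +
        f (lam + (w i + z j)) / f (w i + z j)).transpose =
      (Matrix.of fun i j => u * (f (lam + (z i + w j + δ)) / f (z i + w j + δ)) +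
        f (lam + (z i + w j)) / f (z i + w j)) := by
    ext i j
    simp only [Matrix.transpose_apply, Matrix.of_apply, add_comm (w j)]
  have hp : ∏ i, ∏ j, f (w i + z j) = ∏ i, ∏ j, f (z i + w j) := by
    rw [Finset.prod_comm]
    simp only [add_comm]
  rw [hm, h1, hs, hp, mul_comm (Del f w)] at h2
  refine mul_left_cancel₀ ?_ h2
  have hP : ∏ i, ∏ j, f (z i + w j) ≠ 0 :=
    Finset.prod_ne_zero_iff.2 fun i _ => Finset.prod_ne_zero_iff.2 fun j _ => hzw0 i j
  exact div_ne_zero (mul_ne_zero (mul_ne_zero (pow_ne_zero _ hlam) hl)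
    (mul_ne_zero (Del_ne_zero hz) (Del_ne_zero hw))) hP

/-- Symmetry `F(z|w;u) = F(w|z;u)` of the expansion of `E(T_z;u)D(z|w)` (Theorem 1.2,
identity (1.14)). -/
theorem F_symm_in_z_w
    (f : ℂ → ℂ) (hf : f ≠ 0) (hodd : ∀ t : ℂ, f (-t) = -f t) (hdiff : Differentiable ℂ f)
    (hRiem : ∀ x y u v : ℂ,
      f (x + y) * f (x - y) * f (u + v) * f (u - v) =
        f (x + u) * f (x - u) * f (y + v) * f (y - v)
          - f (x + v) * f (x - v) * f (y + u) * f (y - u))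
    (δ : ℂ) (hδ : ∀ k : ℤ, k ≠ 0 → f ((k : ℂ) * δ) ≠ 0)
    (M : ℕ) (hM : 1 ≤ M) (u lam : ℂ) (z w : Fin M → ℂ)
    (hz : ∀ i j, i ≠ j → f (z i - z j) ≠ 0)
    (hw : ∀ i j, i ≠ j → f (w i - w j) ≠ 0)
    (hzw : ∀ i k, f (z i + w k + δ) ≠ 0)
    (hl : f (lam + (∑ i, z i) + (∑ i, w i)) ≠ 0) :
    (∑ K : Finset (Fin M), u ^ K.card *
        (f (lam + (∑ i, z i) + (∑ i, w i) + (K.card : ℂ) * δ) /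
          f (lam + (∑ i, z i) + (∑ i, w i))) *
        (∏ i ∈ K, ∏ j ∈ Kᶜ, f (z i - z j + δ) / f (z i - z j)) *
        (∏ i ∈ K, ∏ k, f (z i + w k) / f (z i + w k + δ))) =
      ∑ L : Finset (Fin M), u ^ L.card *
        (f (lam + (∑ i, z i) + (∑ i, w i) + (L.card : ℂ) * δ) /
          f (lam + (∑ i, z i) + (∑ i, w i))) *
        (∏ k ∈ L, ∏ l ∈ Lᶜ, f (w k - w l + δ) / f (w k - w l)) *
        (∏ i, ∏ k ∈ L, f (z i + w k) / f (z i + w k + δ)) := by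
  have hc : Continuous f := hdiff.continuous
  have hM0 : (M : ℂ) ≠ 0 := by exact_mod_cast (by omega : M ≠ 0)
  set Lam := lam + (∑ i, z i) + (∑ i, w i) with hLam
  -- Deform `z` to `z + t` and `lam` to `lam - M t`, which leaves `Lam` fixed.
  have hsym : dualSum f δ u Lam z w = dualSum f δ u Lam w z := by
    have := eq_at_zero_of_eventually
      (F := fun t => dualSum f δ u Lam (fun i => z i + t) w)
      (G := fun t => dualSum f δ u Lam w (fun i => z i + t)) ?_ ?_ ?_
    · simpa using this
    · unfold dualSum
      simp only [add_sub_add_right_eq_sub]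
      refine tendsto_finsetSum _ fun K _ => Filter.Tendsto.mul tendsto_const_nhds ?_
      refine tendsto_finsetProd _ fun i _ => tendsto_finsetProd _ fun k _ => ?_
      refine ContinuousAt.div (by fun_prop) (by fun_prop) ?_
      simpa using hzw i k
    · unfold dualSum
      refine tendsto_finsetSum _ fun K _ => Filter.Tendsto.mul tendsto_const_nhds ?_
      refine tendsto_finsetProd _ fun i _ => tendsto_finsetProd _ fun k _ => ?_
      refine ContinuousAt.div (by fun_prop) (by fun_prop) ?_
      simpa [add_comm (w i)] using hzw k i
    · have e1 : ∀ᶠ t in 𝓝[≠] (0 : ℂ), ∀ i k, f (z i + w k + 1 * t) ≠ 0 :=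
        eventually_all.2 fun i => eventually_all.2 fun k =>
          eventually_bracket_ne hf hdiff _ 1 one_ne_zero
      have e2 : ∀ᶠ t in 𝓝[≠] (0 : ℂ), ∀ i k, f (z i + w k + δ + 1 * t) ≠ 0 :=
        eventually_all.2 fun i => eventually_all.2 fun k =>
          eventually_bracket_ne hf hdiff _ 1 one_ne_zero
      filter_upwards [e1, e2, eventually_bracket_ne hf hdiff lam (-M) (neg_ne_zero.2 hM0)]
        with t h1 h2 h3
      have hs : lam + -M * t + (∑ i, (z i + t)) + (∑ i, w i) = Lam := by
        rw [Finset.sum_add_distrib, Finset.sum_const, Finset.card_univ, Fintype.card_fin,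
          nsmul_eq_mul, hLam]
        ring
      have := dualSum_symm_generic hf hodd hdiff hRiem δ u (lam + -M * t) (fun i => z i + t) w h3
        (fun i j hij => by simpa using hz i j hij) hw
        (fun i k => by convert h2 i k using 2; ring)
        (fun i k => by convert h1 i k using 2; ring) (by rw [hs]; exact hl)
      rwa [hs] at this
  refine hsym.trans (Finset.sum_congr rfl fun L _ => ?_)
  rw [Finset.prod_comm (s := Finset.univ) (t := L)]
  simp only [add_comm (w _) (z _)]
end
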